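/- arXiv:2511.15436 — 11 statements merged into one kernel-verified Lean document; each statement's English description precedes it below -/
import Mathlib

section
/- The F_μ-topology on M equals the U_μ-topology on M if and only if μ(X) < ∞. -/
open MeasureTheory Topology Set Pointwise

/-- The set of all real-valued measurable functions on `X`, as a subtype. -/
abbrev Mble (X : Type*) [MeasurableSpace X] : Type _ := {f : X → ℝ // Measurable f}

/-- The basic set `B(f, A, ε)`: all `g` such that for some measurable null set `N`,
`sup_{x ∈ A \ N} |f x - g x| < ε`. -/
def FBall {X : Type*} [MeasurableSpace X] (μ : Measure X) (f : Mble X) (A : Set X)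
    (ε : ℝ) : Set (Mble X) :=
  {g | ∃ N : Set X, MeasurableSet N ∧ μ N = 0 ∧
        ∃ b : ℝ, b < ε ∧ ∀ x ∈ A \ N, |f.1 x - g.1 x| ≤ b}

/-- The `F_μ`-topology on `Mble X`, generated by the sets `B(f, A, ε)` with
`A` measurable of finite measure and `ε > 0`. -/
def FTop {X : Type*} [MeasurableSpace X] (μ : Measure X) : TopologicalSpace (Mble X) :=
  TopologicalSpace.generateFrom
    {S | ∃ (f : Mble X) (A : Set X) (ε : ℝ),
        MeasurableSet A ∧ μ A < ⊤ ∧ 0 < ε ∧ S = FBall μ f A ε}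

/-- A `μ`-atom: a measurable set of positive measure admitting no decomposition into two
disjoint measurable pieces of positive measure. -/
def MuAtom {X : Type*} [MeasurableSpace X] (μ : Measure X) (A : Set X) : Prop :=
  MeasurableSet A ∧ 0 < μ A ∧
    ¬ ∃ B C : Set X, MeasurableSet B ∧ MeasurableSet C ∧ Disjoint B C ∧
        B ∪ C = A ∧ 0 < μ B ∧ 0 < μ C

/-- `G` is a union of finitely many `μ`-atoms. -/
def FinAtomUnion {X : Type*} [MeasurableSpace X] (μ : Measure X) (G : Set X) : Prop :=
  ∃ (n : ℕ) (F : Fin n → Set X), (∀ i, MuAtom μ (F i)) ∧ G = ⋃ i, F i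

/-- `L^∞_G`: the measurable functions that are essentially bounded on `G`. -/
def Linf {X : Type*} [MeasurableSpace X] (μ : Measure X) (G : Set X) : Set (Mble X) :=
  {f | ∃ M₀ : ℝ, 0 < M₀ ∧ ∃ N : Set X, MeasurableSet N ∧ μ N = 0 ∧
        ∀ x ∈ G \ N, |f.1 x| ≤ M₀}

/-- The intersection `⋂_{G ∈ 𝒜_>} L^∞_G`. -/
def InterLinf {X : Type*} [MeasurableSpace X] (μ : Measure X) : Set (Mble X) :=
  ⋂ G ∈ {A : Set X | MeasurableSet A ∧ 0 < μ A ∧ μ A < ⊤}, Linf μ G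

/-- The zero function as an element of `Mble X`. -/
def zeroM {X : Type*} [MeasurableSpace X] : Mble X := ⟨fun _ => 0, measurable_const⟩

/-- `μ` is hemifinite: some sequence in `𝒜_>` almost contains every member of `𝒜_>`. -/
def Hemifinite {X : Type*} [MeasurableSpace X] (μ : Measure X) : Prop :=
  ∃ A : ℕ → Set X, (∀ n, MeasurableSet (A n) ∧ 0 < μ (A n) ∧ μ (A n) < ⊤) ∧
    ∀ F : Set X, MeasurableSet F → 0 < μ F → μ F < ⊤ → ∃ n, μ (F \ A n) = 0

/-- `G⁺`: functions strictly positive μ-almost everywhere on `G`. -/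
def Gplus {X : Type*} [MeasurableSpace X] (μ : Measure X) (G : Set X) : Set (Mble X) :=
  {f | ∃ N : Set X, MeasurableSet N ∧ μ N = 0 ∧ ∀ x ∈ G \ N, 0 < f.1 x}

/-- `G⁰`: functions nonnegative μ-almost everywhere on `G`. -/
def Gzero {X : Type*} [MeasurableSpace X] (μ : Measure X) (G : Set X) : Set (Mble X) :=
  {f | ∃ N : Set X, MeasurableSet N ∧ μ N = 0 ∧ ∀ x ∈ G \ N, 0 ≤ f.1 x}

instance {X : Type*} [MeasurableSpace X] : Add (Mble X) :=
  ⟨fun f g => ⟨f.1 + g.1, f.2.add g.2⟩⟩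

/-- The `U_μ`-topology on `Mble X`, generated by the sets `B(f, X, ε)` with `ε > 0`. -/
def UTop {X : Type*} [MeasurableSpace X] (μ : Measure X) : TopologicalSpace (Mble X) :=
  TopologicalSpace.generateFrom
    {S | ∃ (f : Mble X) (ε : ℝ), 0 < ε ∧ S = FBall μ f Set.univ ε}

/-- The `F_μ`-topology equals the `U_μ`-topology iff `μ X < ∞`. -/
theorem stmt0 {X : Type*} [MeasurableSpace X] (μ : Measure X)
    (hpos : 0 < μ Set.univ)
    (hsub : ∀ A : Set X, MeasurableSet A → μ A = ⊤ →
      ∃ B, B ⊆ A ∧ MeasurableSet B ∧ 0 < μ B ∧ μ B < ⊤) :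
    FTop μ = UTop μ ↔ μ Set.univ < ⊤ := by
  constructor
  · intro h
    have key : ∀ U : Set (Mble X), IsOpen[FTop μ] U → ∀ f ∈ U, ∃ A : Set X, MeasurableSet A ∧
        μ A < ⊤ ∧ ∀ g : Mble X, (∀ x ∈ A, g.1 x = f.1 x) → g ∈ U := by
      intro U hU
      induction hU with
      | basic S hS =>
        obtain ⟨f0, A, ε, hA, hfin, hε, rfl⟩ := hS
        rintro f ⟨N, hN, hN0, b, hb, hle⟩
        refine ⟨A, hA, hfin, fun g hg => ⟨N, hN, hN0, b, hb, fun x hx => ?_⟩⟩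
        rw [hg x hx.1]
        exact hle x hx
      | univ => exact fun f _ => ⟨∅, MeasurableSet.empty, by simp, fun g _ => mem_univ g⟩
      | inter S T _ _ ihS ihT =>
        intro f hf
        obtain ⟨A, hA, hA', h1⟩ := ihS f hf.1
        obtain ⟨B, hB, hB', h2⟩ := ihT f hf.2
        exact ⟨A ∪ B, hA.union hB, measure_union_lt_top hA' hB', fun g hg =>
          ⟨h1 g fun x hx => hg x (Or.inl hx), h2 g fun x hx => hg x (Or.inr hx)⟩⟩
      | sUnion 𝒮 _ ih =>
        rintro f ⟨S, hS, hf⟩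
        obtain ⟨A, hA, hA', h1⟩ := ih S hS f hf
        exact ⟨A, hA, hA', fun g hg => ⟨S, hS, h1 g hg⟩⟩
    have hopen : IsOpen[FTop μ] (FBall μ zeroM Set.univ 1) := by
      rw [h]
      exact TopologicalSpace.GenerateOpen.basic _ ⟨zeroM, 1, one_pos, rfl⟩
    obtain ⟨A, hA, hfin, hg⟩ := key _ hopen zeroM
      ⟨∅, MeasurableSet.empty, by simp, 0, one_pos, fun x _ => by simp⟩
    classical
    obtain ⟨N, hN, hN0, b, hb, hle⟩ := hg
      ⟨Aᶜ.indicator fun _ => (2 : ℝ), measurable_const.indicator hA.compl⟩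
      (fun x hx => by simp [hx, zeroM])
    have hsubset : (Set.univ : Set X) ⊆ A ∪ N := by
      intro x _
      by_contra hx
      rw [mem_union, not_or] at hx
      have := hle x ⟨mem_univ x, hx.2⟩
      simp [zeroM, hx.1] at this
      linarith
    exact (measure_mono hsubset).trans_lt (measure_union_lt_top hfin (by simp [hN0]))
  · intro hfin
    apply le_antisymm
    · apply le_generateFrom
      rintro S ⟨f, ε, hε, rfl⟩
      exact TopologicalSpace.GenerateOpen.basic _
        ⟨f, Set.univ, ε, MeasurableSet.univ, hfin, hε, rfl⟩
    · apply le_generateFrom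
      rintro S ⟨f, A, ε, hA, hA', hε, rfl⟩
      letI := UTop μ
      rw [isOpen_iff_forall_mem_open]
      rintro g ⟨N, hN, hN0, b, hb, hle⟩
      refine ⟨FBall μ g Set.univ (ε - b), ?_, TopologicalSpace.GenerateOpen.basic _
        ⟨g, ε - b, by linarith, rfl⟩,
        ⟨∅, MeasurableSet.empty, by simp, 0, by linarith, fun x _ => by simp⟩⟩
      rintro k ⟨N', hN', hN0', b', hb', hle'⟩
      refine ⟨N ∪ N', hN.union hN', measure_union_null hN0 hN0', b + b', by linarith, ?_⟩
      rintro x ⟨hxA, hxN⟩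
      rw [mem_union, not_or] at hxN
      have h1 := hle x ⟨hxA, hxN.1⟩
      have h2 := hle' x ⟨mem_univ x, hxN.2⟩
      have h3 := abs_sub_le (f.1 x) (g.1 x) (k.1 x)
      linarith
end

section
/- For every G ∈ 𝒜_>, the set L^∞_G is both open and closed in M_F. -/
open MeasureTheory Topology Set Pointwise

/-- For every `G ∈ 𝒜_>`, `L^∞_G` is clopen in `M_F`. -/
theorem stmt2 {X : Type*} [MeasurableSpace X] (μ : Measure X)
    (hpos : 0 < μ Set.univ)
    (hsub : ∀ A : Set X, MeasurableSet A → μ A = ⊤ →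
      ∃ B, B ⊆ A ∧ MeasurableSet B ∧ 0 < μ B ∧ μ B < ⊤)
    (G : Set X) (hG : MeasurableSet G) (hG0 : 0 < μ G) (hGfin : μ G < ⊤) :
    IsOpen[FTop μ] (Linf μ G) ∧ IsClosed[FTop μ] (Linf μ G) := by
  have self_mem : ∀ f : Mble X, f ∈ FBall μ f G 1 := fun f =>
    ⟨∅, MeasurableSet.empty, measure_empty, 0, one_pos, fun x _ => by simp⟩
  have hopen : ∀ f : Mble X, IsOpen[FTop μ] (FBall μ f G 1) := fun f =>
    TopologicalSpace.isOpen_generateFrom_of_mem ⟨f, G, 1, hG, hGfin, one_pos, rfl⟩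
  have key : ∀ f g : Mble X, g ∈ FBall μ f G 1 → (f ∈ Linf μ G ↔ g ∈ Linf μ G) := by
    rintro f g ⟨N, hN, hN0, b, hb, h⟩
    constructor
    · rintro ⟨K, hK, P, hP, hP0, hb2⟩
      refine ⟨K + 1, by linarith, N ∪ P, hN.union hP, measure_union_null hN0 hP0, ?_⟩
      rintro x ⟨hx, hxN⟩
      have h1 := abs_le.1 (h x ⟨hx, fun hh => hxN (Or.inl hh)⟩)
      have h2 := abs_le.1 (hb2 x ⟨hx, fun hh => hxN (Or.inr hh)⟩)
      exact abs_le.2 ⟨by linarith, by linarith⟩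
    · rintro ⟨K, hK, P, hP, hP0, hb2⟩
      refine ⟨K + 1, by linarith, N ∪ P, hN.union hP, measure_union_null hN0 hP0, ?_⟩
      rintro x ⟨hx, hxN⟩
      have h1 := abs_le.1 (h x ⟨hx, fun hh => hxN (Or.inl hh)⟩)
      have h2 := abs_le.1 (hb2 x ⟨hx, fun hh => hxN (Or.inr hh)⟩)
      exact abs_le.2 ⟨by linarith, by linarith⟩
  letI := FTop μ
  refine ⟨?_, ?_⟩
  · exact isOpen_iff_forall_mem_open.2 fun f hf =>
      ⟨FBall μ f G 1, fun g hg => (key f g hg).1 hf, hopen f, self_mem f⟩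
  · refine isOpen_compl_iff.1 ?_
    exact isOpen_iff_forall_mem_open.2 fun f hf =>
      ⟨FBall μ f G 1, fun g hg hg2 => hf ((key f g hg).2 hg2), hopen f, self_mem f⟩
end

section
/- For any measurable set G with μ(G) > 0, L^∞_G = M if and only if G can be written as a union of finitely many μ-atoms. -/
open MeasureTheory Topology Set Pointwise

lemma atom_bdd {X : Type*} [MeasurableSpace X] (μ : Measure X) (A : Set X) (hA : MuAtom μ A)
    (f : X → ℝ) (hf : Measurable f) :
    ∃ n : ℕ, μ (A ∩ {x | (n : ℝ) < |f x|}) = 0 := by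
  obtain ⟨hm, hp, hn⟩ := hA
  by_contra! h
  have hms : ∀ n : ℕ, MeasurableSet {x | (n : ℝ) < |f x|} := fun n =>
    measurableSet_lt measurable_const (by fun_prop)
  have h0 : ∀ n : ℕ, μ (A \ {x | (n : ℝ) < |f x|}) = 0 := by
    intro n
    by_contra hc
    exact hn ⟨_, _, hm.inter (hms n), hm.diff (hms n),
      (disjoint_sdiff_inter).symm, inter_union_sdiff _ _,
      pos_iff_ne_zero.2 (h n), pos_iff_ne_zero.2 hc⟩
  have h1 := measure_iUnion_null h0
  have h2 : A ⊆ ⋃ n : ℕ, A \ {x | (n : ℝ) < |f x|} := by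
    intro x hx
    obtain ⟨n, hn⟩ := exists_nat_ge |f x|
    exact mem_iUnion.2 ⟨n, hx, by simpa using hn⟩
  exact hp.ne' (measure_mono_null h2 h1)

lemma fin_union {X : Type*} [MeasurableSpace X] (μ : Measure X) (A B : Set X)
    (hA : FinAtomUnion μ A) (hB : FinAtomUnion μ B) : FinAtomUnion μ (A ∪ B) := by
  obtain ⟨n, F, hF, rfl⟩ := hA
  obtain ⟨m, F', hF', rfl⟩ := hB
  refine ⟨n + m, Fin.append F F', fun i => ?_, ?_⟩
  · refine Fin.addCases (fun i => ?_) (fun i => ?_) i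
    · simpa using hF i
    · simpa using hF' i
  · ext x
    simp only [mem_union, mem_iUnion]
    constructor
    · rintro (⟨i, hi⟩ | ⟨i, hi⟩)
      · exact ⟨Fin.castAdd m i, by simpa using hi⟩
      · exact ⟨Fin.natAdd n i, by simpa using hi⟩
    · rintro ⟨i, hi⟩
      induction i using Fin.addCases with
      | left i => exact Or.inl ⟨i, by simpa using hi⟩
      | right i => exact Or.inr ⟨i, by simpa using hi⟩

lemma bad_step {X : Type*} [MeasurableSpace X] (μ : Measure X) (H : Set X)
    (hm : MeasurableSet H) (hp : 0 < μ H) (hb : ¬ FinAtomUnion μ H) :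
    ∃ H' : Set X, (MeasurableSet H' ∧ 0 < μ H' ∧ ¬ FinAtomUnion μ H') ∧ H' ⊆ H ∧
      0 < μ (H \ H') := by
  have hna : ¬ MuAtom μ H := fun h =>
    hb ⟨1, fun _ => H, fun _ => h, by simp [iUnion_const]⟩
  have : ∃ B C : Set X, MeasurableSet B ∧ MeasurableSet C ∧ Disjoint B C ∧
        B ∪ C = H ∧ 0 < μ B ∧ 0 < μ C := by
    by_contra h
    exact hna ⟨hm, hp, h⟩
  obtain ⟨B, C, hB, hC, hd, rfl, hB0, hC0⟩ := this
  by_cases h : FinAtomUnion μ B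
  · refine ⟨C, ⟨hC, hC0, fun h' => hb (fin_union μ B C h h')⟩, subset_union_right, ?_⟩
    rwa [union_sdiff_right, hd.sdiff_eq_left]
  · refine ⟨B, ⟨hB, hB0, h⟩, subset_union_left, ?_⟩
    rwa [union_sdiff_left, hd.symm.sdiff_eq_left]

/-- For measurable `G` with `μ G > 0`, `L^∞_G = M` iff `G` is a finite
union of `μ`-atoms. -/
theorem stmt3 {X : Type*} [MeasurableSpace X] (μ : Measure X)
    (G : Set X) (hG : MeasurableSet G) (hG0 : 0 < μ G) :
    Linf μ G = Set.univ ↔ FinAtomUnion μ G := by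
  constructor
  · intro hL
    by_contra hb
    let T := {H : Set X // MeasurableSet H ∧ 0 < μ H ∧ ¬ FinAtomUnion μ H}
    have hstep : ∀ H : T, ∃ H' : T, H'.1 ⊆ H.1 ∧ 0 < μ (H.1 \ H'.1) := by
      rintro ⟨H, h1, h2, h3⟩
      obtain ⟨H', h, h'⟩ := bad_step μ H h1 h2 h3
      exact ⟨⟨H', h⟩, h'⟩
    choose s hs using hstep
    let S : ℕ → T := fun n => s^[n] ⟨G, hG, hG0, hb⟩
    have hS : ∀ n, S (n + 1) = s (S n) := fun n => Function.iterate_succ_apply' s n _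
    have hanti : Antitone (fun n => (S n).1) :=
      antitone_nat_of_succ_le fun n => by
        simp only [hS]
        exact (hs _).1
    let K : ℕ → Set X := fun n => (S n).1 \ (S (n + 1)).1
    have hKp : ∀ n, 0 < μ (K n) := fun n => by
      simp only [K, hS]
      exact (hs _).2
    have hKm : ∀ n, MeasurableSet (K n) := fun n => (S n).2.1.diff (S (n + 1)).2.1
    have hKG : ∀ n, K n ⊆ G := fun n x hx => hanti (Nat.zero_le n) hx.1
    have hKd : ∀ n m x, x ∈ K n → x ∈ K m → n = m := by
      intro n m x hn hm
      rcases lt_trichotomy n m with h | h | h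
      · exact absurd (hanti (Nat.succ_le_of_lt h) hm.1) hn.2
      · exact h
      · exact absurd (hanti (Nat.succ_le_of_lt h) hn.1) hm.2
    let f : X → ℝ := fun x =>
      (∑' n : ℕ, (K n).indicator (fun _ => (n : ENNReal)) x).toReal
    have hf : Measurable f :=
      (Measurable.ennreal_tsum fun n => measurable_const.indicator (hKm n)).ennreal_toReal
    have hfK : ∀ n x, x ∈ K n → f x = n := by
      intro n x hx
      simp only [f]
      rw [tsum_eq_single n]
      · simp [hx]
      · intro m hm
        exact indicator_of_notMem (fun h => hm (hKd m n x h hx)) _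
    have : (⟨f, hf⟩ : Mble X) ∈ Linf μ G := hL ▸ mem_univ _
    obtain ⟨M, -, N, -, hN, hbd⟩ := this
    obtain ⟨n, hn⟩ := exists_nat_gt M
    refine (hKp n).ne' (measure_mono_null (fun x hx => ?_) hN)
    by_contra hxN
    have h := hbd x ⟨hKG n hx, hxN⟩
    simp only [hfK n x hx, Nat.abs_cast] at h
    linarith
  · rintro ⟨n, F, hF, rfl⟩
    refine eq_univ_of_forall fun f => ?_
    choose b hb using fun i => atom_bdd μ (F i) (hF i) f.1 f.2
    refine ⟨(∑ i, (b i : ℝ)) + 1, by positivity, ⋃ i, F i ∩ {x | (b i : ℝ) < |f.1 x|}, ?_,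
      measure_iUnion_null hb, ?_⟩
    · exact MeasurableSet.iUnion fun i => (hF i).1.inter
        (measurableSet_lt measurable_const (by have := f.2; fun_prop))
    · rintro x ⟨hx, hxN⟩
      obtain ⟨i, hi⟩ := mem_iUnion.1 hx
      have h1 : |f.1 x| ≤ b i := by
        by_contra! h
        exact hxN (mem_iUnion.2 ⟨i, hi, h⟩)
      have h2 : (b i : ℝ) ≤ ∑ i, (b i : ℝ) :=
        Finset.single_le_sum (f := fun i => (b i : ℝ)) (fun _ _ => by positivity)
          (Finset.mem_univ i)
      linarith
end

section
/- The set ⋂_{G ∈ 𝒜_>} L^∞_G, equipped with the subspace topology inherited from M_F, is path connected. -/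
open MeasureTheory Topology Set Pointwise

/-- Members of `InterLinf` are essentially bounded on all sets of finite measure. -/
lemma interLinf_bdd {X : Type*} [MeasurableSpace X] (μ : Measure X) (f : Mble X)
    (hf : f ∈ InterLinf μ) (A : Set X) (hA : MeasurableSet A) (hfin : μ A < ⊤) : f ∈ Linf μ A := by
  rcases eq_or_ne (μ A) 0 with h0 | h0
  · exact ⟨1, one_pos, A, hA, h0, fun x hx => absurd hx.1 hx.2⟩
  · exact Set.mem_iInter₂.1 hf A ⟨hA, pos_iff_ne_zero.2 h0, hfin⟩

/-- Scalar multiple. -/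
def smulM {X : Type*} [MeasurableSpace X] (t : ℝ) (f : Mble X) : Mble X :=
  ⟨fun x => t * f.1 x, f.2.const_mul t⟩

lemma smulM_mem {X : Type*} [MeasurableSpace X] (μ : Measure X) (f : Mble X)
    (hf : f ∈ InterLinf μ) (t : ℝ) : smulM t f ∈ InterLinf μ := by
  refine Set.mem_iInter₂.2 fun G hG => ?_
  obtain ⟨M, hM, N, hN, hN0, hb⟩ := Set.mem_iInter₂.1 hf G hG
  refine ⟨(|t| + 1) * M, by positivity, N, hN, hN0, fun x hx => ?_⟩
  have := hb x hx
  simp only [smulM, abs_mul]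
  exact mul_le_mul (by linarith) this (abs_nonneg _) (by positivity)

lemma smulM_cont {X : Type*} [MeasurableSpace X] (μ : Measure X) (f : Mble X)
    (hf : f ∈ InterLinf μ) :
    @Continuous ℝ (Mble X) _ (FTop μ) (fun t => smulM t f) := by
  refine continuous_generateFrom_iff.2 ?_
  rintro S ⟨g, A, ε, hA, hfin, hε, rfl⟩
  obtain ⟨M, hM, N, hN, hN0, hb⟩ := interLinf_bdd μ f hf A hA hfin
  rw [Metric.isOpen_iff]
  rintro t ⟨N', hN', hN0', b, hbε, hb'⟩
  refine ⟨(ε - b) / (2 * M), div_pos (by linarith) (by positivity), fun s hs => ?_⟩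
  refine ⟨N ∪ N', hN.union hN', measure_union_null hN0 hN0', b + (ε - b) / 2, by linarith,
    fun x hx => ?_⟩
  have h1 := hb x ⟨hx.1, fun h => hx.2 (Or.inl h)⟩
  have h2 := hb' x ⟨hx.1, fun h => hx.2 (Or.inr h)⟩
  rw [Metric.mem_ball, Real.dist_eq, lt_div_iff₀ (by positivity)] at hs
  simp only [smulM] at h2 ⊢
  have e : g.1 x - s * f.1 x = (g.1 x - t * f.1 x) - (s - t) * f.1 x := by ring
  have h3 : |(s - t) * f.1 x| ≤ |s - t| * M := by
    rw [abs_mul]; exact mul_le_mul_of_nonneg_left h1 (abs_nonneg _)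
  have h4 := abs_sub (g.1 x - t * f.1 x) ((s - t) * f.1 x)
  rw [e]
  linarith

/-- `⋂_{G ∈ 𝒜_>} L^∞_G` is path connected in the `F_μ`-topology. -/
theorem stmt4 {X : Type*} [MeasurableSpace X] (μ : Measure X)
    (hpos : 0 < μ Set.univ)
    (hsub : ∀ A : Set X, MeasurableSet A → μ A = ⊤ →
      ∃ B, B ⊆ A ∧ MeasurableSet B ∧ 0 < μ B ∧ μ B < ⊤) :
    @IsPathConnected (Mble X) (FTop μ) (InterLinf μ) := by
  letI : TopologicalSpace (Mble X) := FTop μ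
  have h0 : (zeroM : Mble X) ∈ InterLinf μ := Set.mem_iInter₂.2 fun G _ =>
    ⟨1, one_pos, ∅, MeasurableSet.empty, measure_empty, fun x _ => by simp [zeroM]⟩
  refine ⟨zeroM, h0, fun f hf => ?_⟩
  refine JoinedIn.ofLine (f := fun t => smulM t f) (smulM_cont μ f hf).continuousOn ?_ ?_ ?_
  · simp [smulM, zeroM]
  · simp [smulM]
  · rintro _ ⟨t, _, rfl⟩
    exact smulM_mem μ f hf t
end

section
/- The following are equivalent: (i) M_F is path connected; (ii) M_F is connected; (iii) every A ∈ 𝒜_> can be written as a union of finitely many μ-atoms. -/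
open MeasureTheory Topology Set Pointwise

theorem MuAtom.finAtomUnion {X : Type*} [MeasurableSpace X] {μ : Measure X} {A : Set X}
    (h : MuAtom μ A) : FinAtomUnion μ A :=
  ⟨1, fun _ => A, fun _ => h, (iUnion_const A).symm⟩

theorem FinAtomUnion.union {X : Type*} [MeasurableSpace X] {μ : Measure X} {A B : Set X}
    (hA : FinAtomUnion μ A) (hB : FinAtomUnion μ B) : FinAtomUnion μ (A ∪ B) := by
  obtain ⟨n, F, hF, rfl⟩ := hA
  obtain ⟨m, G, hG, rfl⟩ := hB
  refine ⟨n + m, fun i => Sum.elim F G (finSumFinEquiv.symm i), fun i => ?_, ?_⟩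
  · beta_reduce
    rcases finSumFinEquiv.symm i with j | j
    · exact hF j
    · exact hG j
  · rw [finSumFinEquiv.symm.surjective.iUnion_comp (Sum.elim F G), iUnion_sum]
    rfl

theorem MuAtom.mem_Linf {X : Type*} [MeasurableSpace X] {μ : Measure X} {A : Set X}
    (h : MuAtom μ A) (f : Mble X) : f ∈ Linf μ A := by
  obtain ⟨hA, hp, hn⟩ := h
  have hm : ∀ n : ℕ, MeasurableSet {x | |f.1 x| ≤ n} := fun n =>
    measurableSet_le (continuous_abs.measurable.comp f.2) measurable_const
  have h1 : ∃ n : ℕ, 0 < μ (A ∩ {x | |f.1 x| ≤ n}) := by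
    by_contra! hc
    have : μ (⋃ n : ℕ, A ∩ {x | |f.1 x| ≤ n}) = 0 :=
      measure_iUnion_null fun n => le_antisymm (hc n) bot_le
    have hs : A ⊆ ⋃ n : ℕ, A ∩ {x | |f.1 x| ≤ n} := fun x hx => by
      obtain ⟨n, hn⟩ := exists_nat_ge |f.1 x|
      exact mem_iUnion.2 ⟨n, hx, hn⟩
    exact hp.ne' (measure_mono_null hs this)
  obtain ⟨n, hnn⟩ := h1
  refine ⟨n + 1, by positivity, A \ {x | |f.1 x| ≤ n}, hA.diff (hm n), ?_, ?_⟩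
  · by_contra h0
    exact hn ⟨A ∩ {x | |f.1 x| ≤ n}, A \ {x | |f.1 x| ≤ n}, hA.inter (hm n), hA.diff (hm n),
      disjoint_sdiff_right.mono_left inter_subset_right, inter_union_diff _ _, hnn,
      pos_iff_ne_zero.2 h0⟩
  · rintro x ⟨hx, hx'⟩
    by_contra hc
    apply hx'
    refine ⟨hx, fun hle => hc ?_⟩
    have : |f.1 x| ≤ n := hle
    linarith

theorem FinAtomUnion.mem_Linf {X : Type*} [MeasurableSpace X] {μ : Measure X} {A : Set X}
    (h : FinAtomUnion μ A) (f : Mble X) : f ∈ Linf μ A := by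
  obtain ⟨n, F, hF, rfl⟩ := h
  choose M hM N hN hN0 hb using fun i => (hF i).mem_Linf f
  refine ⟨∑ i, M i + 1, ?_, ⋃ i, N i, MeasurableSet.iUnion hN, measure_iUnion_null hN0, ?_⟩
  · have := Finset.sum_nonneg (s := Finset.univ) fun i _ => (hM i).le
    linarith
  · rintro x ⟨hx, hx'⟩
    obtain ⟨i, hi⟩ := mem_iUnion.1 hx
    have h1 := hb i x ⟨hi, fun h => hx' (mem_iUnion.2 ⟨i, h⟩)⟩
    have h2 := Finset.single_le_sum (f := M) (fun j _ => (hM j).le) (Finset.mem_univ i)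
    linarith

theorem exists_step {X : Type*} [MeasurableSpace X] {μ : Measure X} {S : Set X}
    (hS : MeasurableSet S) (hp : 0 < μ S) (hb : ¬ FinAtomUnion μ S) :
    ∃ T, T ⊆ S ∧ (MeasurableSet T ∧ 0 < μ T ∧ ¬ FinAtomUnion μ T) ∧ 0 < μ (S \ T) := by
  have : ¬ MuAtom μ S := fun h => hb h.finAtomUnion
  simp only [MuAtom, hS, hp, true_and, not_not] at this
  obtain ⟨B, C, hB, hC, hd, rfl, hpB, hpC⟩ := this
  by_cases h : FinAtomUnion μ B
  · refine ⟨C, subset_union_right, ⟨hC, hpC, fun h' => hb (h.union h')⟩, ?_⟩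
    rwa [union_diff_right, hd.sdiff_eq_left]
  · refine ⟨B, subset_union_left, ⟨hB, hpB, h⟩, ?_⟩
    rwa [union_diff_left, hd.symm.sdiff_eq_left]

theorem finAtomUnion_of_Linf {X : Type*} [MeasurableSpace X] {μ : Measure X} {A : Set X}
    (hA : MeasurableSet A) (hp : 0 < μ A) (h : ∀ f, f ∈ Linf μ A) : FinAtomUnion μ A := by
  by_contra hbad
  let T := {S : Set X // MeasurableSet S ∧ 0 < μ S ∧ ¬ FinAtomUnion μ S}
  choose step hsub hprop hpos using fun S : T => exists_step S.2.1 S.2.2.1 S.2.2.2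
  let S : ℕ → T := fun n => Nat.rec ⟨A, hA, hp, hbad⟩ (fun _ S => ⟨step S, hprop S⟩) n
  have hanti : Antitone fun n => (S n).1 := antitone_nat_of_succ_le fun n => hsub (S n)
  let D : ℕ → Set X := fun n => (S n).1 \ (S (n + 1)).1
  have hD : ∀ n, MeasurableSet (D n) := fun n => (S n).2.1.diff (S (n + 1)).2.1
  have hDp : ∀ n, 0 < μ (D n) := fun n => hpos (S n)
  have hDA : ∀ n, D n ⊆ A := fun n => diff_subset.trans (hanti (Nat.zero_le n))
  have hdis : ∀ n m x, x ∈ D n → x ∈ D m → n = m := by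
    intro n m x hn hm
    rcases lt_trichotomy n m with hlt | heq | hlt
    · exact absurd (hanti (Nat.succ_le_of_lt hlt) hm.1) hn.2
    · exact heq
    · exact absurd (hanti (Nat.succ_le_of_lt hlt) hn.1) hm.2
  let f : Mble X := ⟨fun x => (∑' k, (D k).indicator (fun _ => (k : ENNReal)) x).toReal,
    (Measurable.ennreal_tsum fun k => measurable_const.indicator (hD k)).ennreal_toReal⟩
  have hf : ∀ n x, x ∈ D n → f.1 x = n := by
    intro n x hx
    change (∑' k, (D k).indicator (fun _ => (k : ENNReal)) x).toReal = n
    rw [tsum_eq_single n, indicator_of_mem hx, ENNReal.toReal_natCast]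
    intro m hm
    exact indicator_of_notMem (fun h' => hm (hdis _ _ _ h' hx)) _
  obtain ⟨M, -, N, hN, hN0, hb⟩ := h f
  obtain ⟨n, hn⟩ := exists_nat_gt M
  have : (D n \ N).Nonempty := by
    apply nonempty_of_measure_ne_zero (μ := μ)
    rw [measure_sdiff_null hN0]
    exact (hDp n).ne'
  obtain ⟨x, hx, hxN⟩ := this
  have h1 := hb x ⟨hDA n hx, hxN⟩
  rw [hf n x hx] at h1
  have := le_abs_self (n : ℝ)
  linarith

theorem FBall_isOpen {X : Type*} [MeasurableSpace X] {μ : Measure X} (f : Mble X) {A : Set X}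
    (hA : MeasurableSet A) (hfin : μ A < ⊤) {ε : ℝ} (hε : 0 < ε) :
    @IsOpen _ (FTop μ) (FBall μ f A ε) :=
  TopologicalSpace.isOpen_generateFrom_of_mem ⟨f, A, ε, hA, hfin, hε, rfl⟩

theorem FBall_self {X : Type*} [MeasurableSpace X] {μ : Measure X} (f : Mble X) {A : Set X}
    {ε : ℝ} (hε : 0 < ε) : f ∈ FBall μ f A ε :=
  ⟨∅, MeasurableSet.empty, measure_empty, 0, hε, by simp⟩

theorem Linf_of_close {X : Type*} [MeasurableSpace X] {μ : Measure X} {f g : Mble X} {A : Set X}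
    (hf : f ∈ Linf μ A) {N : Set X} (hN : MeasurableSet N) (hN0 : μ N = 0)
    (h : ∀ x ∈ A \ N, |f.1 x - g.1 x| ≤ 1) : g ∈ Linf μ A := by
  obtain ⟨M, hM, N', hN', hN0', hb⟩ := hf
  refine ⟨M + 1, by linarith, N ∪ N', hN.union hN', measure_union_null hN0 hN0', ?_⟩
  rintro x ⟨hx, hx'⟩
  have h1 := h x ⟨hx, fun h => hx' (Or.inl h)⟩
  have h2 := hb x ⟨hx, fun h => hx' (Or.inr h)⟩
  rw [abs_le] at *
  constructor <;> linarith

theorem Linf_isClopen {X : Type*} [MeasurableSpace X] {μ : Measure X} {A : Set X}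
    (hA : MeasurableSet A) (hfin : μ A < ⊤) : @IsClopen _ (FTop μ) (Linf μ A) := by
  letI := FTop μ
  constructor
  · rw [← isOpen_compl_iff, isOpen_iff_mem_nhds]
    intro f hf
    refine Filter.mem_of_superset
      ((FBall_isOpen f hA hfin one_pos).mem_nhds (FBall_self f one_pos)) ?_
    rintro g ⟨N, hN, hN0, b, hb, h⟩ hg
    exact hf (Linf_of_close hg hN hN0 fun x hx => by
      rw [abs_sub_comm]; exact (h x hx).trans hb.le)
  · rw [isOpen_iff_mem_nhds]
    intro f hf
    refine Filter.mem_of_superset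
      ((FBall_isOpen f hA hfin one_pos).mem_nhds (FBall_self f one_pos)) ?_
    rintro g ⟨N, hN, hN0, b, hb, h⟩
    exact Linf_of_close hf hN hN0 fun x hx => (h x hx).trans hb.le

theorem finAtomUnion_of_connected {X : Type*} [MeasurableSpace X] {μ : Measure X}
    (hc : @ConnectedSpace (Mble X) (FTop μ)) {A : Set X} (hA : MeasurableSet A) (hp : 0 < μ A)
    (hfin : μ A < ⊤) : FinAtomUnion μ A := by
  letI := FTop μ
  have h0 : (Linf μ A).Nonempty :=
    ⟨zeroM, 1, one_pos, ∅, MeasurableSet.empty, measure_empty, by simp [zeroM]⟩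
  have := (Linf_isClopen hA hfin).eq_univ h0
  exact finAtomUnion_of_Linf hA hp fun f => this ▸ mem_univ f

/-- The segment from `f` to `g`. -/
def segM {X : Type*} [MeasurableSpace X] (f g : Mble X) (t : ℝ) : Mble X :=
  ⟨fun x => f.1 x + t * (g.1 x - f.1 x), f.2.add ((g.2.sub f.2).const_mul t)⟩

theorem segM_continuous {X : Type*} [MeasurableSpace X] {μ : Measure X}
    (h : ∀ A : Set X, MeasurableSet A → 0 < μ A → μ A < ⊤ → FinAtomUnion μ A) (f g : Mble X) :
    @Continuous ℝ (Mble X) _ (FTop μ) (segM f g) := by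
  refine continuous_generateFrom_iff.2 ?_
  rintro _ ⟨k, A, ε, hA, hfin, hε, rfl⟩
  have hL : (⟨fun x => g.1 x - f.1 x, g.2.sub f.2⟩ : Mble X) ∈ Linf μ A := by
    rcases eq_or_ne (μ A) 0 with h0 | h0
    · exact ⟨1, one_pos, A, hA, h0, by simp⟩
    · exact (h A hA (pos_iff_ne_zero.2 h0) hfin).mem_Linf _
  obtain ⟨K, hK, N', hN', hN0', hb'⟩ := hL
  rw [Metric.isOpen_iff]
  rintro t ⟨N, hN, hN0, b, hb, hx⟩
  refine ⟨(ε - b) / 2 / K, by have := sub_pos.2 hb; positivity, fun s hs => ?_⟩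
  refine ⟨N ∪ N', hN.union hN', measure_union_null hN0 hN0', (ε + b) / 2, by linarith, ?_⟩
  rintro x ⟨hxA, hxN⟩
  have h1 := hx x ⟨hxA, fun h => hxN (Or.inl h)⟩
  have h2 : |g.1 x - f.1 x| ≤ K := hb' x ⟨hxA, fun h => hxN (Or.inr h)⟩
  rw [Metric.mem_ball, Real.dist_eq, lt_div_iff₀ hK] at hs
  have h3 : |(t - s) * (g.1 x - f.1 x)| ≤ (ε - b) / 2 := by
    rw [abs_mul, abs_sub_comm]
    exact (mul_le_mul_of_nonneg_left h2 (abs_nonneg _)).trans hs.le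
  have h4 : k.1 x - (segM f g s).1 x =
      (k.1 x - (segM f g t).1 x) + (t - s) * (g.1 x - f.1 x) := by
    simp only [segM]; ring
  rw [h4]
  refine (abs_add_le _ _).trans ?_
  linarith

theorem pathConnected_of_finAtomUnion {X : Type*} [MeasurableSpace X] {μ : Measure X}
    (h : ∀ A : Set X, MeasurableSet A → 0 < μ A → μ A < ⊤ → FinAtomUnion μ A) :
    @PathConnectedSpace (Mble X) (FTop μ) := by
  letI := FTop μ
  refine ⟨⟨zeroM⟩, fun f g => ⟨⟨⟨fun t => segM f g t, ?_⟩, ?_, ?_⟩⟩⟩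
  · exact (segM_continuous h f g).comp continuous_subtype_val
  · apply Subtype.ext; funext x; simp [segM]
  · apply Subtype.ext; funext x; simp [segM]

/-- `M_F` is path connected iff it is connected iff every `A ∈ 𝒜_>`
is a finite union of `μ`-atoms. -/
theorem stmt6 {X : Type*} [MeasurableSpace X] (μ : Measure X)
    (hpos : 0 < μ Set.univ)
    (hsub : ∀ A : Set X, MeasurableSet A → μ A = ⊤ →
      ∃ B, B ⊆ A ∧ MeasurableSet B ∧ 0 < μ B ∧ μ B < ⊤) :
    (@PathConnectedSpace (Mble X) (FTop μ) ↔ @ConnectedSpace (Mble X) (FTop μ)) ∧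
    (@ConnectedSpace (Mble X) (FTop μ) ↔
      ∀ A : Set X, MeasurableSet A → 0 < μ A → μ A < ⊤ → FinAtomUnion μ A) := by
  have h12 : @PathConnectedSpace (Mble X) (FTop μ) → @ConnectedSpace (Mble X) (FTop μ) :=
    fun h => @PathConnectedSpace.connectedSpace _ (FTop μ) h
  have h23 : @ConnectedSpace (Mble X) (FTop μ) →
      ∀ A : Set X, MeasurableSet A → 0 < μ A → μ A < ⊤ → FinAtomUnion μ A :=
    fun h A hA hp hf => finAtomUnion_of_connected h hA hp hf
  exact ⟨⟨h12, fun h => pathConnected_of_finAtomUnion (h23 h)⟩,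
    h23, fun h => h12 (pathConnected_of_finAtomUnion h)⟩
end

section
/- If G ∈ 𝒜_> is a μ-atom, then G⁺ is an open subset of M_F. If μ is nonatomic, then for every G ∈ 𝒜_>, the set G⁺ is not open in M_F. -/
open MeasureTheory Topology Set Pointwise

theorem aux_basis {X : Type*} [MeasurableSpace X] (μ : Measure X) (U : Set (Mble X))
    (hU : IsOpen[FTop μ] U) : ∀ f ∈ U, ∃ (A : Set X) (ε : ℝ),
      MeasurableSet A ∧ μ A < ⊤ ∧ 0 < ε ∧ FBall μ f A ε ⊆ U := by
  have hU' : TopologicalSpace.GenerateOpen {S | ∃ (f : Mble X) (A : Set X) (ε : ℝ),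
        MeasurableSet A ∧ μ A < ⊤ ∧ 0 < ε ∧ S = FBall μ f A ε} U := hU
  induction hU' with
  | basic s hs =>
    obtain ⟨h, A, ε, hA, hfin, hε, rfl⟩ := hs
    rintro f ⟨N, hN, hN0, b, hb, hfb⟩
    refine ⟨A, ε - b, hA, hfin, by linarith, ?_⟩
    rintro g ⟨N', hN', hN0', c, hc, hgc⟩
    refine ⟨N ∪ N', hN.union hN', measure_union_null hN0 hN0', b + c, by linarith, ?_⟩
    rintro x ⟨hx, hxN⟩
    have h1 := hfb x ⟨hx, fun h => hxN (Or.inl h)⟩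
    have h2 := hgc x ⟨hx, fun h => hxN (Or.inr h)⟩
    have h3 := abs_sub_le (h.1 x) (f.1 x) (g.1 x)
    linarith
  | univ =>
    intro f _
    exact ⟨∅, 1, MeasurableSet.empty, by simp, one_pos, subset_univ _⟩
  | inter s t hs ht ihs iht =>
    rintro f ⟨hfs, hft⟩
    obtain ⟨A, ε, hA, hAf, hε, hAs⟩ := ihs hs f hfs
    obtain ⟨B, η, hB, hBf, hη, hBs⟩ := iht ht f hft
    refine ⟨A ∪ B, min ε η, hA.union hB, measure_union_lt_top hAf hBf, lt_min hε hη, ?_⟩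
    rintro g ⟨N, hN, hN0, c, hc, hgc⟩
    exact ⟨hAs ⟨N, hN, hN0, c, hc.trans_le (min_le_left _ _),
        fun x hx => hgc x ⟨Or.inl hx.1, hx.2⟩⟩,
      hBs ⟨N, hN, hN0, c, hc.trans_le (min_le_right _ _),
        fun x hx => hgc x ⟨Or.inr hx.1, hx.2⟩⟩⟩
  | sUnion S hS ih =>
    rintro f ⟨s, hs, hfs⟩
    obtain ⟨A, ε, hA, hAf, hε, hAs⟩ := ih s hs (hS s hs) f hfs
    exact ⟨A, ε, hA, hAf, hε, hAs.trans (subset_sUnion_of_mem hs)⟩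

theorem aux_half {X : Type*} [MeasurableSpace X] (μ : Measure X)
    (hna : ∀ A : Set X, ¬ MuAtom μ A) (G : Set X) (hG : MeasurableSet G) (h0 : 0 < μ G) :
    ∃ H ⊆ G, MeasurableSet H ∧ 0 < μ H ∧ μ H ≤ μ G / 2 := by
  have h := hna G
  simp only [MuAtom, not_and, not_not] at h
  obtain ⟨B, C, hB, hC, hd, rfl, hB0, hC0⟩ := h hG h0
  rw [measure_union hd hC]
  rcases le_total (μ B) (μ C) with hle | hle
  · refine ⟨B, subset_union_left, hB, hB0, ?_⟩
    rw [ENNReal.le_div_iff_mul_le (by simp) (by simp), mul_two]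
    gcongr
  · refine ⟨C, subset_union_right, hC, hC0, ?_⟩
    rw [ENNReal.le_div_iff_mul_le (by simp) (by simp), mul_two]
    gcongr

theorem aux_seq {X : Type*} [MeasurableSpace X] (μ : Measure X)
    (hna : ∀ A : Set X, ¬ MuAtom μ A) (G : Set X) (hG : MeasurableSet G) (h0 : 0 < μ G)
    (hfin : μ G < ⊤) :
    ∃ H : ℕ → Set X, (∀ n, H n ⊆ G) ∧ (∀ n, MeasurableSet (H n)) ∧ (∀ n, 0 < μ (H n)) ∧
      Antitone H ∧ ∀ x, ∃ n, x ∉ H n := by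
  choose! F hF1 hF2 hF3 hF4 using aux_half μ hna
  let K : ℕ → Set X := fun n => F^[n] G
  have hs : ∀ n, K (n+1) = F (K n) := fun n => Function.iterate_succ_apply' F n G
  have hK : ∀ n, MeasurableSet (K n) ∧ 0 < μ (K n) := by
    intro n
    induction n with
    | zero => exact ⟨hG, h0⟩
    | succ n ih => rw [hs]; exact ⟨hF2 _ ih.1 ih.2, hF3 _ ih.1 ih.2⟩
  have hanti : Antitone K := antitone_nat_of_succ_le fun n => by
    rw [hs]; exact hF1 _ (hK n).1 (hK n).2
  have hle : ∀ n, μ (K n) ≤ μ G * (2⁻¹ : ENNReal) ^ n := by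
    intro n
    induction n with
    | zero => simp [K]
    | succ n ih =>
      rw [hs, pow_succ, ← mul_assoc]
      refine (hF4 _ (hK n).1 (hK n).2).trans ?_
      rw [div_eq_mul_inv]
      gcongr
  have hnull : μ (⋂ n, K n) = 0 := by
    have ht : Filter.Tendsto (fun n : ℕ => μ G * (2⁻¹ : ENNReal) ^ n) Filter.atTop (𝓝 (μ G * 0)) :=
      ENNReal.Tendsto.const_mul
        (ENNReal.tendsto_pow_atTop_nhds_zero_of_lt_one (by simp)) (Or.inr hfin.ne)
    rw [mul_zero] at ht
    exact le_antisymm (ge_of_tendsto' ht fun n =>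
      (measure_mono (iInter_subset _ n)).trans (hle n)) bot_le
  refine ⟨fun n => K n \ ⋂ k, K k, fun n => diff_subset.trans (hanti (Nat.zero_le n)),
    fun n => (hK n).1.diff (MeasurableSet.iInter fun k => (hK k).1), fun n => ?_,
    fun m n hmn => diff_subset_diff_left (hanti hmn), fun x => ?_⟩
  · rw [measure_diff_null hnull]; exact (hK n).2
  · by_cases hx : x ∈ ⋂ k, K k
    · exact ⟨0, fun h => h.2 hx⟩
    · obtain ⟨n, hn⟩ := not_forall.1 (fun h => hx (mem_iInter.2 h))
      exact ⟨n, fun h => hn h.1⟩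

/-- if `G ∈ 𝒜_>` is a `μ`-atom then `G⁺` is open in `M_F`; if `μ` is
nonatomic, then `G⁺` is not open in `M_F` for any `G ∈ 𝒜_>`. -/
theorem stmt11 {X : Type*} [MeasurableSpace X] (μ : Measure X)
    (hpos : 0 < μ Set.univ)
    (hsub : ∀ A : Set X, MeasurableSet A → μ A = ⊤ →
      ∃ B, B ⊆ A ∧ MeasurableSet B ∧ 0 < μ B ∧ μ B < ⊤) :
    (∀ G : Set X, MeasurableSet G → 0 < μ G → μ G < ⊤ → MuAtom μ G →
        IsOpen[FTop μ] (Gplus μ G)) ∧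
    ((∀ A : Set X, ¬ MuAtom μ A) →
      ∀ G : Set X, MeasurableSet G → 0 < μ G → μ G < ⊤ →
        ¬ IsOpen[FTop μ] (Gplus μ G)) := by
  classical
  constructor
  · intro G hG h0 hfin hat
    letI := FTop μ
    rw [isOpen_iff_forall_mem_open]
    rintro f ⟨N, hN, hN0, hfN⟩
    have hex : ∃ n : ℕ, 0 < μ (G ∩ {x | 1 / ((n : ℝ) + 1) < f.1 x}) := by
      by_contra! hcon
      have hnull : μ (N ∪ ⋃ n : ℕ, G ∩ {x | 1 / ((n : ℝ) + 1) < f.1 x}) = 0 :=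
        measure_union_null hN0 (measure_iUnion_null fun n => le_antisymm (hcon n) bot_le)
      refine h0.ne' (measure_mono_null (fun x hx => ?_) hnull)
      by_cases hxN : x ∈ N
      · exact Or.inl hxN
      · obtain ⟨n, hn⟩ := exists_nat_one_div_lt (hfN x ⟨hx, hxN⟩)
        exact Or.inr (mem_iUnion.2 ⟨n, hx, hn⟩)
    obtain ⟨n, hn⟩ := hex
    have hδ : 0 < 1 / ((n : ℝ) + 1) := Nat.one_div_pos_of_nat
    set δ : ℝ := 1 / ((n : ℝ) + 1)
    have hm : MeasurableSet {x | δ < f.1 x} := measurableSet_lt measurable_const f.2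
    have hz : μ (G \ {x | δ < f.1 x}) = 0 := by
      by_contra hne
      exact hat.2.2 ⟨_, _, hG.inter hm, hG.diff hm,
        disjoint_sdiff_right.mono_left inter_subset_right, inter_union_diff _ _, hn,
        pos_iff_ne_zero.2 hne⟩
    refine ⟨FBall μ f G δ, ?_, TopologicalSpace.isOpen_generateFrom_of_mem
      ⟨f, G, δ, hG, hfin, hδ, rfl⟩, ⟨∅, MeasurableSet.empty, by simp, 0, hδ, by simp⟩⟩
    rintro g ⟨N', hN', hN0', b, hb, hgb⟩
    refine ⟨N' ∪ (G \ {x | δ < f.1 x}), hN'.union (hG.diff hm),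
      measure_union_null hN0' hz, ?_⟩
    rintro x ⟨hx, hxn⟩
    have h1 := hgb x ⟨hx, fun h => hxn (Or.inl h)⟩
    have h2 : δ < f.1 x := by
      by_contra h
      exact hxn (Or.inr ⟨hx, h⟩)
    have h3 := (abs_le.1 h1).2
    linarith
  · intro hna G hG h0 hfin hop
    obtain ⟨H, hHG, hHm, hH0, hanti, hex⟩ := aux_seq μ hna G hG h0 hfin
    have hfind : Measurable fun x => Nat.find (hex x) :=
      measurable_find hex fun k => (hHm k).compl
    let φ : ℕ → ℝ := fun k => 1 / ((k : ℝ) + 1)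
    have hφ : Measurable φ := measurable_from_top
    let f : Mble X := ⟨fun x => φ (Nat.find (hex x)), hφ.comp hfind⟩
    have hfpos : ∀ x, 0 < f.1 x := fun x => Nat.one_div_pos_of_nat
    obtain ⟨A, ε, hA, hAf, hε, hsubs⟩ := aux_basis μ _ hop f
      ⟨∅, MeasurableSet.empty, by simp, fun x _ => hfpos x⟩
    obtain ⟨n, hn⟩ := exists_nat_one_div_lt hε
    let g : Mble X := ⟨(H n)ᶜ.indicator f.1, f.2.indicator (hHm n).compl⟩
    have hg : g ∈ FBall μ f A ε := by
      refine ⟨∅, MeasurableSet.empty, by simp, _, hn, fun x _ => ?_⟩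
      by_cases hx : x ∈ H n
      · have hgx : g.1 x = 0 := indicator_of_notMem (by simpa using hx) _
        rw [hgx, sub_zero, abs_of_pos (hfpos x)]
        have hle : n ≤ Nat.find (hex x) := by
          by_contra! hlt
          exact Nat.find_spec (hex x) (hanti hlt.le hx)
        exact Nat.one_div_le_one_div hle
      · have hgx : g.1 x = f.1 x := indicator_of_mem (by simpa using hx) _
        rw [hgx, sub_self, abs_zero]
        exact Nat.one_div_pos_of_nat.le
    obtain ⟨N, hN, hN0, hgN⟩ := hsubs hg
    refine (hH0 n).ne' (measure_mono_null (fun x hx => ?_) hN0)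
    by_contra hxN
    have h1 := hgN x ⟨hHG n hx, hxN⟩
    have hgx : g.1 x = 0 := indicator_of_notMem (by simpa using hx) _
    exact h1.ne' hgx
end

section
/- If G ∈ 𝒜_> is a μ-atom, then the closure of G⁺ in M_F equals G⁰, and G⁰ is not an open subset of M_F. -/
open MeasureTheory Topology Set Pointwise

/-- Every open set is stable under adding sufficiently small constants. -/
theorem ftop_shift {X : Type*} [MeasurableSpace X] (μ : Measure X) (U : Set (Mble X))
    (hU : IsOpen[FTop μ] U) :
    ∀ f ∈ U, ∃ δ : ℝ, 0 < δ ∧ ∀ c : ℝ, |c| < δ →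
      (⟨fun x => f.1 x + c, f.2.add_const c⟩ : Mble X) ∈ U := by
  change TopologicalSpace.GenerateOpen _ U at hU
  induction hU with
  | basic s hs =>
    obtain ⟨h, A, ε, hA, hAf, hε, rfl⟩ := hs
    rintro f ⟨N, hN, hN0, b, hb, hfb⟩
    refine ⟨ε - b, by linarith, fun c hc => ⟨N, hN, hN0, b + |c|, by linarith, ?_⟩⟩
    intro x hx
    have h1 := hfb x hx
    have h2 : h.1 x - (f.1 x + c) = (h.1 x - f.1 x) - c := by ring
    change |h.1 x - (f.1 x + c)| ≤ b + |c|
    rw [h2]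
    exact (abs_sub _ _).trans (by linarith)
  | univ => exact fun f _ => ⟨1, one_pos, fun c _ => trivial⟩
  | inter s t _ _ ihs iht =>
    rintro f ⟨hs, ht⟩
    obtain ⟨d, hd, h1⟩ := ihs f hs
    obtain ⟨e, he, h2⟩ := iht f ht
    exact ⟨min d e, lt_min hd he, fun c hc =>
      ⟨h1 c (hc.trans_le (min_le_left _ _)), h2 c (hc.trans_le (min_le_right _ _))⟩⟩
  | sUnion S _ ih =>
    rintro f ⟨s, hs, hf⟩
    obtain ⟨d, hd, h1⟩ := ih s hs f hf
    exact ⟨d, hd, fun c hc => ⟨s, hs, h1 c hc⟩⟩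

/-- `G⁰` is closed. -/
theorem gzero_closed {X : Type*} [MeasurableSpace X] (μ : Measure X) (G : Set X)
    (hG : MeasurableSet G) (hGfin : μ G < ⊤) : IsClosed[FTop μ] (Gzero μ G) := by
  letI := FTop μ
  rw [← isOpen_compl_iff, isOpen_iff_forall_mem_open]
  intro f hf
  have hm : ∀ n : ℕ, MeasurableSet (G ∩ {x | f.1 x < -(1 / ((n : ℝ) + 1))}) := fun n =>
    hG.inter (measurableSet_lt f.2 measurable_const)
  have hex : ∃ n : ℕ, μ (G ∩ {x | f.1 x < -(1 / ((n : ℝ) + 1))}) ≠ 0 := by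
    by_contra hcon
    push Not at hcon
    apply hf
    refine ⟨⋃ n : ℕ, G ∩ {x | f.1 x < -(1 / ((n : ℝ) + 1))}, MeasurableSet.iUnion hm,
      measure_iUnion_null hcon, ?_⟩
    rintro x ⟨hxG, hxN⟩
    by_contra hx
    push Not at hx
    obtain ⟨n, hn⟩ := exists_nat_one_div_lt (neg_pos.2 hx)
    exact hxN (mem_iUnion.2 ⟨n, hxG, by simp only [mem_setOf_eq]; linarith⟩)
  obtain ⟨n, hn⟩ := hex
  have hp : (0 : ℝ) < 1 / ((n : ℝ) + 1) := by positivity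
  refine ⟨FBall μ f (G ∩ {x | f.1 x < -(1 / ((n : ℝ) + 1))}) (1 / ((n : ℝ) + 1)), ?_, ?_, ?_⟩
  · rintro g ⟨N, hN, hN0, b, hb, hgb⟩ ⟨N', hN', hN0', hg⟩
    apply hn
    refine measure_mono_null ?_ (measure_union_null hN0 hN0')
    rintro x ⟨hxG, hx⟩
    by_contra hxN
    simp only [mem_union, not_or] at hxN
    have h1 := (abs_le.1 (hgb x ⟨⟨hxG, hx⟩, hxN.1⟩)).1
    have h2 := hg x ⟨hxG, hxN.2⟩
    simp only [mem_setOf_eq] at hx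
    linarith
  · exact TopologicalSpace.GenerateOpen.basic _
      ⟨f, _, _, hm n, (measure_mono inter_subset_left).trans_lt hGfin, hp, rfl⟩
  · exact ⟨∅, MeasurableSet.empty, measure_empty, 0, hp, fun x _ => by simp⟩

/-- if `G ∈ 𝒜_>` is a `μ`-atom, then the closure of `G⁺` in `M_F` is `G⁰`,
and `G⁰` is not open in `M_F`. -/
theorem stmt12 {X : Type*} [MeasurableSpace X] (μ : Measure X)
    (hpos : 0 < μ Set.univ)
    (hsub : ∀ A : Set X, MeasurableSet A → μ A = ⊤ →
      ∃ B, B ⊆ A ∧ MeasurableSet B ∧ 0 < μ B ∧ μ B < ⊤)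
    (G : Set X) (hG : MeasurableSet G) (hG0 : 0 < μ G) (hGfin : μ G < ⊤)
    (hatom : MuAtom μ G) :
    @closure (Mble X) (FTop μ) (Gplus μ G) = Gzero μ G ∧
      ¬ IsOpen[FTop μ] (Gzero μ G) := by
  constructor
  · letI := FTop μ
    apply Subset.antisymm
    · refine closure_minimal ?_ (gzero_closed μ G hG hGfin)
      rintro f ⟨N, hN, hN0, h⟩
      exact ⟨N, hN, hN0, fun x hx => (h x hx).le⟩
    · rintro f ⟨N, hN, hN0, h⟩
      rw [mem_closure_iff]
      intro U hU hfU
      obtain ⟨d, hd, hc⟩ := ftop_shift μ U hU f hfU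
      refine ⟨_, hc (d / 2) (by rw [abs_of_pos (by linarith)]; linarith), N, hN, hN0, ?_⟩
      intro x hx
      have := h x hx
      change 0 < f.1 x + d / 2
      linarith
  · intro hop
    obtain ⟨d, hd, hc⟩ := ftop_shift μ _ hop zeroM
      ⟨∅, MeasurableSet.empty, measure_empty, fun x _ => le_refl (0 : ℝ)⟩
    obtain ⟨N, hN, hN0, h⟩ := hc (-(d / 2)) (by rw [abs_neg, abs_of_pos (by linarith)]; linarith)
    refine hG0.ne' (measure_mono_null ?_ hN0)
    intro x hx
    by_contra hxN
    have h1 : (0 : ℝ) ≤ 0 + -(d / 2) := h x ⟨hx, hxN⟩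
    linarith
end

section
/- The space M_F is not extremally disconnected: there exists an open subset of M_F whose closure is not open. -/
open MeasureTheory Topology Set Pointwise

/-- `M_F` is not extremally disconnected. -/
theorem stmt13 {X : Type*} [MeasurableSpace X] (μ : Measure X)
    (hpos : 0 < μ Set.univ)
    (hsub : ∀ A : Set X, MeasurableSet A → μ A = ⊤ →
      ∃ B, B ⊆ A ∧ MeasurableSet B ∧ 0 < μ B ∧ μ B < ⊤) :
    ∃ U : Set (Mble X), IsOpen[FTop μ] U ∧
      ¬ IsOpen[FTop μ] (@closure (Mble X) (FTop μ) U) := by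
  classical
  obtain ⟨A, hA, hA0, hAt⟩ : ∃ A : Set X, MeasurableSet A ∧ 0 < μ A ∧ μ A < ⊤ := by
    by_cases h : μ Set.univ = ⊤
    · obtain ⟨B, -, h1, h2, h3⟩ := hsub _ MeasurableSet.univ h
      exact ⟨B, h1, h2, h3⟩
    · exact ⟨Set.univ, MeasurableSet.univ, hpos, lt_top_iff_ne_top.2 h⟩
  letI : TopologicalSpace (Mble X) := FTop μ
  let c : ℝ → Mble X := fun t => ⟨fun _ => t, measurable_const⟩
  have hc : Continuous c := by
    refine continuous_generateFrom_iff.2 ?_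
    rintro S ⟨f, B, ε, hB, hBt, hε, rfl⟩
    rw [Metric.isOpen_iff]
    rintro t ⟨N, hN, hN0, b, hb, h⟩
    refine ⟨(ε - b) / 2, by linarith, ?_⟩
    intro s hs
    rw [Metric.mem_ball, Real.dist_eq] at hs
    refine ⟨N, hN, hN0, b + (ε - b) / 2, by linarith, ?_⟩
    intro x hx
    have h1 : |f.1 x - t| ≤ b := h x hx
    change |f.1 x - s| ≤ _
    rw [abs_lt] at hs
    rw [abs_le] at h1 ⊢
    constructor <;> linarith
  have hopen : ∀ t : ℝ, IsOpen (FBall μ (c t) A 1) := fun t =>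
    TopologicalSpace.isOpen_generateFrom_of_mem ⟨c t, A, 1, hA, hAt, one_pos, rfl⟩
  have hmem : ∀ t : ℝ, c t ∈ FBall μ (c t) A 1 := fun t =>
    ⟨∅, MeasurableSet.empty, measure_empty, 0, one_pos, fun x _ => by simp⟩
  refine ⟨FBall μ (c 0) A 1, hopen 0, fun hK => ?_⟩
  have hclopen : IsClopen (c ⁻¹' closure (FBall μ (c 0) A 1)) :=
    ⟨isClosed_closure.preimage hc, hK.preimage hc⟩
  have huniv := hclopen.eq_univ ⟨0, subset_closure (hmem 0)⟩
  have h2 : c 2 ∈ closure (FBall μ (c 0) A 1) := by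
    have : (2 : ℝ) ∈ c ⁻¹' closure (FBall μ (c 0) A 1) := huniv ▸ Set.mem_univ _
    exact this
  obtain ⟨g, ⟨N, hN, hN0, b, hb, h⟩, ⟨N', hN', hN0', b', hb', h'⟩⟩ :=
    mem_closure_iff.1 h2 _ (hopen 2) (hmem 2)
  have hne : (A \ (N ∪ N')).Nonempty := by
    apply nonempty_of_measure_ne_zero (μ := μ)
    rw [measure_sdiff_null (measure_union_null hN0 hN0')]
    exact hA0.ne'
  obtain ⟨x, hxA, hxN⟩ := hne
  have e1 : |2 - g.1 x| ≤ b := h x ⟨hxA, fun hx => hxN (Or.inl hx)⟩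
  have e2 : |0 - g.1 x| ≤ b' := h' x ⟨hxA, fun hx => hxN (Or.inr hx)⟩
  rw [abs_le] at e1 e2
  linarith [e1.1, e1.2, e2.1, e2.2]
end

section
/- Suppose there exists F ∈ 𝒜_> that cannot be written as a union of finitely many μ-atoms. Then every compact subset K of M_F has empty interior. -/
open MeasureTheory Topology Set Pointwise

theorem aux_base {X : Type*} [MeasurableSpace X] (μ : Measure X) (U : Set (Mble X))
    (hU : @IsOpen (Mble X) (FTop μ) U) (f : Mble X) (hf : f ∈ U) :
    ∃ (A : Set X) (ε : ℝ), MeasurableSet A ∧ μ A < ⊤ ∧ 0 < ε ∧ FBall μ f A ε ⊆ U := by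
  change TopologicalSpace.GenerateOpen _ U at hU
  induction hU with
  | basic s hs =>
    obtain ⟨g, A, ε, hA, hA', hε, rfl⟩ := hs
    obtain ⟨N, hN, hN0, b, hb, h⟩ := hf
    refine ⟨A, ε - b, hA, hA', by linarith, ?_⟩
    rintro k ⟨N', hN', hN0', b', hb', h'⟩
    refine ⟨N ∪ N', hN.union hN', measure_union_null hN0 hN0', b + b', by linarith, ?_⟩
    rintro x ⟨hx, hxN⟩
    rw [mem_union, not_or] at hxN
    have h1 := h x ⟨hx, hxN.1⟩
    have h2 := h' x ⟨hx, hxN.2⟩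
    have h3 := abs_sub_le (g.1 x) (f.1 x) (k.1 x)
    linarith
  | univ => exact ⟨∅, 1, MeasurableSet.empty, by simp, one_pos, subset_univ _⟩
  | inter s t _ _ ihs iht =>
    obtain ⟨A, ε, hA, hA', hε, h⟩ := ihs hf.1
    obtain ⟨B, δ, hB, hB', hδ, h'⟩ := iht hf.2
    refine ⟨A ∪ B, min ε δ, hA.union hB, measure_union_lt_top hA' hB', lt_min hε hδ, ?_⟩
    rintro k ⟨N, hN, hN0, b, hb, hk⟩
    refine ⟨h ⟨N, hN, hN0, b, hb.trans_le (min_le_left _ _), ?_⟩,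
      h' ⟨N, hN, hN0, b, hb.trans_le (min_le_right _ _), ?_⟩⟩
    · exact fun x hx => hk x ⟨Or.inl hx.1, hx.2⟩
    · exact fun x hx => hk x ⟨Or.inr hx.1, hx.2⟩
  | sUnion S _ ih =>
    obtain ⟨s, hs, hfs⟩ := hf
    obtain ⟨A, ε, hA, hA', hε, h⟩ := ih s hs hfs
    exact ⟨A, ε, hA, hA', hε, h.trans (subset_sUnion_of_mem hs)⟩

theorem aux_split {X : Type*} [MeasurableSpace X] (μ : Measure X) (F : Set X)
    (hF : MeasurableSet F) (hpos : 0 < μ F) (hnot : ¬ FinAtomUnion μ F) (n : ℕ) :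
    ∃ E : ℕ → Set X, (∀ i ≤ n, MeasurableSet (E i) ∧ 0 < μ (E i)) ∧
      (∀ i ≤ n, ∀ j ≤ n, i ≠ j → ∀ x ∈ E i, x ∉ E j) ∧
      (∀ x, x ∈ F ↔ ∃ i ≤ n, x ∈ E i) := by
  induction n with
  | zero => exact ⟨fun _ => F, by simp [hF, hpos], by grind, by grind⟩
  | succ n ih =>
    obtain ⟨E, h1, h2, h3⟩ := ih
    have hex : ∃ i ≤ n, ¬ MuAtom μ (E i) := by
      by_contra! hc
      refine hnot ⟨n + 1, fun i => E i, fun i => hc i (by omega), ?_⟩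
      ext x
      rw [h3 x, mem_iUnion]
      exact ⟨fun ⟨i, hi, hx⟩ => ⟨⟨i, by omega⟩, hx⟩, fun ⟨i, hx⟩ => ⟨i, by omega, hx⟩⟩
    obtain ⟨i, hi, hat⟩ := hex
    have hsp : ∃ B C : Set X, MeasurableSet B ∧ MeasurableSet C ∧ Disjoint B C ∧
        B ∪ C = E i ∧ 0 < μ B ∧ 0 < μ C := by
      by_contra hc
      exact hat ⟨(h1 i hi).1, (h1 i hi).2, hc⟩
    obtain ⟨B, C, hB, hC, hd, hu, hB0, hC0⟩ := hsp
    have hu' : ∀ x, x ∈ E i ↔ x ∈ B ∨ x ∈ C := fun x => by rw [← hu]; rfl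
    have hd' : ∀ x, x ∈ B → x ∉ C := fun x hx hx' => disjoint_left.1 hd hx hx'
    clear hd hu hat hnot
    refine ⟨fun j => if j = i then B else if j = n + 1 then C else E j, ?_, ?_, ?_⟩
    · intro j hj
      dsimp only
      split_ifs
      · exact ⟨hB, hB0⟩
      · exact ⟨hC, hC0⟩
      · exact h1 j (by omega)
    · intro j hj k hk hjk x
      dsimp only
      have a1 := h2 j
      have a2 := h2 i hi
      split_ifs <;> grind
    · intro x
      rw [h3 x]
      constructor
      · rintro ⟨j, hj, hx⟩
        by_cases hji : j = i
        · subst hji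
          rcases (hu' x).1 hx with h | h
          · exact ⟨j, by omega, by simpa using h⟩
          · exact ⟨n + 1, le_rfl, by simpa [show n + 1 ≠ j by omega] using h⟩
        · exact ⟨j, by omega, by simpa [hji, show j ≠ n + 1 by omega] using hx⟩
      · rintro ⟨j, hj, hx⟩
        dsimp only at hx
        split_ifs at hx with c1 c2
        · exact ⟨i, hi, (hu' x).2 (Or.inl hx)⟩
        · exact ⟨i, hi, (hu' x).2 (Or.inr hx)⟩
        · exact ⟨j, by omega, hx⟩

/-- if some `F ∈ 𝒜_>` is not a finite union of `μ`-atoms, then every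
compact subset of `M_F` has empty interior. -/
theorem stmt14 {X : Type*} [MeasurableSpace X] (μ : Measure X)
    (hpos : 0 < μ Set.univ)
    (hsub : ∀ A : Set X, MeasurableSet A → μ A = ⊤ →
      ∃ B, B ⊆ A ∧ MeasurableSet B ∧ 0 < μ B ∧ μ B < ⊤)
    (hF : ∃ F : Set X, MeasurableSet F ∧ 0 < μ F ∧ μ F < ⊤ ∧ ¬ FinAtomUnion μ F) :
    ∀ K : Set (Mble X), @IsCompact (Mble X) (FTop μ) K →
      @interior (Mble X) (FTop μ) K = ∅ := by
  classical
  intro K hK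
  obtain ⟨F, hFm, hF0, hFt, hFn⟩ := hF
  letI := FTop μ
  by_contra hne
  obtain ⟨f, hf⟩ := Set.nonempty_iff_ne_empty.2 hne
  obtain ⟨A, ε, hA, hA', hε, hball⟩ := aux_base μ (interior K) isOpen_interior f hf
  obtain ⟨t, ht⟩ := hK.elim_finite_subcover (fun g : Mble X => FBall μ g F (ε / 4))
    (fun g => TopologicalSpace.isOpen_generateFrom_of_mem
      ⟨g, F, ε / 4, hFm, hFt, by positivity, rfl⟩)
    (fun g _ => mem_iUnion.2 ⟨g, ∅, MeasurableSet.empty, by simp, 0, by positivity, by simp⟩)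
  obtain ⟨E, h1, h2, h3⟩ := aux_split μ F hFm hF0 hFn t.card
  have hc : ∀ i ∈ Finset.range (t.card + 1), ∃ k : Mble X,
      (∀ x, k.1 x = f.1 x + (E i).indicator (fun _ => ε / 2) x) ∧
      ∃ g ∈ t, k ∈ FBall μ g F (ε / 4) := by
    intro i hi
    have hi' : i ≤ t.card := by simpa [Nat.lt_succ_iff] using hi
    let k : Mble X := ⟨fun x => f.1 x + (E i).indicator (fun _ => ε / 2) x,
      f.2.add (measurable_const.indicator (h1 i hi').1)⟩
    have hk : k ∈ K := by
      refine interior_subset (hball ⟨∅, MeasurableSet.empty, by simp, ε / 2, by linarith, ?_⟩)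
      intro x _
      change |f.1 x - (f.1 x + (E i).indicator (fun _ => ε / 2) x)| ≤ ε / 2
      by_cases hx : x ∈ E i
      · simpa [hx] using (abs_of_pos (half_pos hε)).le
      · simpa [hx] using (half_pos hε).le
    refine ⟨k, fun _ => rfl, ?_⟩
    simpa using ht hk
  have hinh : Nonempty (Mble X) := ⟨f⟩
  choose! k hk g hg hkg using hc
  obtain ⟨i, hi, j, hj, hij, hgij⟩ := Finset.exists_ne_map_eq_of_card_lt_of_maps_to
    (s := Finset.range (t.card + 1)) (t := t) (by simp) hg
  have hi' : i ≤ t.card := by simpa [Nat.lt_succ_iff] using hi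
  have hj' : j ≤ t.card := by simpa [Nat.lt_succ_iff] using hj
  obtain ⟨N, hN, hN0, b, hb, h⟩ := hkg i hi
  obtain ⟨N', hN', hN0', b', hb', h'⟩ := hkg j hj
  have hnn : ∃ x ∈ E i, x ∉ N ∪ N' := by
    by_contra! hc
    exact (h1 i hi').2.ne' (measure_mono_null hc (measure_union_null hN0 hN0'))
  obtain ⟨x, hx, hxN⟩ := hnn
  rw [mem_union, not_or] at hxN
  have hxF : x ∈ F := (h3 x).2 ⟨i, hi', hx⟩
  have e1 := h x ⟨hxF, hxN.1⟩
  have e2 := h' x ⟨hxF, hxN.2⟩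
  rw [hk i hi, indicator_of_mem hx] at e1
  rw [hk j hj, indicator_of_notMem (h2 i hi' j hj' hij x hx), ← hgij] at e2
  rw [abs_le] at e1 e2
  linarith [e1.1, e1.2, e2.1, e2.2]
end

section
/- If μ is nonatomic and hemifinite, then μ(X) < ∞. -/
open MeasureTheory Topology Set Pointwise

theorem aux_halve {X : Type*} [MeasurableSpace X] (μ : Measure X)
    (hna : ∀ A : Set X, ¬ MuAtom μ A) (S : Set X) (hS : MeasurableSet S) (h0 : 0 < μ S) (k : ℕ) :
    ∃ B, B ⊆ S ∧ MeasurableSet B ∧ 0 < μ B ∧ μ B ≤ μ S * (2⁻¹ : ENNReal) ^ k := by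
  induction k with
  | zero => exact ⟨S, Subset.rfl, hS, h0, by simp⟩
  | succ k ih =>
    obtain ⟨B, hBS, hB, hB0, hBk⟩ := ih
    have h := hna B
    unfold MuAtom at h
    push Not at h
    obtain ⟨C, D, hC, hD, hdisj, hU, hC0, hD0⟩ := h hB hB0
    have hsum : μ C + μ D = μ B := by rw [← hU, measure_union hdisj hD]
    have key : ∀ a b c : ENNReal, a ≤ b → a + b = c → a ≤ c * 2⁻¹ := by
      intro a b c hab habc
      rw [← div_eq_mul_inv, ENNReal.le_div_iff_mul_le (by simp) (by simp), mul_two, ← habc]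
      gcongr
    rcases le_total (μ C) (μ D) with hle | hle
    · refine ⟨C, (hU ▸ subset_union_left : C ⊆ B).trans hBS, hC, hC0, ?_⟩
      calc μ C ≤ μ B * 2⁻¹ := key _ _ _ hle hsum
        _ ≤ (μ S * 2⁻¹ ^ k) * 2⁻¹ := by gcongr
        _ = _ := by rw [pow_succ, mul_assoc]
    · refine ⟨D, (hU ▸ subset_union_right : D ⊆ B).trans hBS, hD, hD0, ?_⟩
      calc μ D ≤ μ B * 2⁻¹ := key _ _ _ hle (by rw [add_comm]; exact hsum)
        _ ≤ (μ S * 2⁻¹ ^ k) * 2⁻¹ := by gcongr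
        _ = _ := by rw [pow_succ, mul_assoc]

theorem aux_small {X : Type*} [MeasurableSpace X] (μ : Measure X)
    (hna : ∀ A : Set X, ¬ MuAtom μ A) (S : Set X) (hS : MeasurableSet S) (h0 : 0 < μ S)
    (hf : μ S < ⊤) (ε : ENNReal) (hε : 0 < ε) :
    ∃ B, B ⊆ S ∧ MeasurableSet B ∧ 0 < μ B ∧ μ B ≤ ε := by
  have ht : Filter.Tendsto (fun k : ℕ => μ S * (2⁻¹ : ENNReal) ^ k) Filter.atTop (𝓝 0) := by
    have := ENNReal.Tendsto.const_mul (a := μ S)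
      (ENNReal.tendsto_pow_atTop_nhds_zero_of_lt_one (r := 2⁻¹) (by simp)) (Or.inr hf.ne)
    simpa using this
  obtain ⟨k, hk⟩ := (ht.eventually (gt_mem_nhds hε)).exists
  obtain ⟨B, h1, h2, h3, h4⟩ := aux_halve μ hna S hS h0 k
  exact ⟨B, h1, h2, h3, h4.trans hk.le⟩

/-- a nonatomic hemifinite measure is finite. -/
theorem stmt15 {X : Type*} [MeasurableSpace X] (μ : Measure X)
    (hpos : 0 < μ Set.univ)
    (hsub : ∀ A : Set X, MeasurableSet A → μ A = ⊤ →
      ∃ B, B ⊆ A ∧ MeasurableSet B ∧ 0 < μ B ∧ μ B < ⊤)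
    (hna : ∀ A : Set X, ¬ MuAtom μ A) (hhemi : Hemifinite μ) :
    μ Set.univ < ⊤ := by
  by_contra hfin
  have htop : μ Set.univ = ⊤ := by simpa using hfin
  obtain ⟨A, hA, hF⟩ := hhemi
  obtain ⟨ε, hε, hεsum⟩ := ENNReal.exists_pos_sum_of_countable' (ε := 1) one_ne_zero ℕ
  have hex : ∀ n, ∃ B, B ⊆ (A n)ᶜ ∧ MeasurableSet B ∧ 0 < μ B ∧ μ B ≤ ε n := by
    intro n
    have hc : μ (A n)ᶜ = ⊤ := by
      rw [measure_compl (hA n).1 (hA n).2.2.ne, htop]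
      exact ENNReal.top_sub (hA n).2.2.ne
    obtain ⟨S, hSA, hS, hS0, hSf⟩ := hsub _ (hA n).1.compl hc
    obtain ⟨B, h1, h2, h3, h4⟩ := aux_small μ hna S hS hS0 hSf (ε n) (hε n)
    exact ⟨B, h1.trans hSA, h2, h3, h4⟩
  choose B hBA hB hB0 hBε using hex
  obtain ⟨n, hn⟩ := hF (⋃ n, B n) (MeasurableSet.iUnion hB)
    ((hB0 0).trans_le (measure_mono (subset_iUnion B 0)))
    (((measure_iUnion_le B).trans (ENNReal.tsum_le_tsum hBε)).trans_lt
      (hεsum.trans ENNReal.one_lt_top))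
  have : μ (B n) ≤ μ ((⋃ n, B n) \ A n) :=
    measure_mono fun x hx => ⟨mem_iUnion_of_mem n hx, hBA n hx⟩
  exact absurd (this.trans hn.le) (not_le.mpr (hB0 n))
end

section
/- For every f ∈ M let [f] = {g ∈ M : g(x) = f(x) for μ-almost every x ∈ X}. Then [f] is a G_δ subset of M_F for every f ∈ M if and only if μ is σ-finite. -/
open MeasureTheory Topology Set Pointwise

/-- An open set around `f` contains every function agreeing with `f` on some set of
finite measure. -/
theorem FTop_open_agree {X : Type*} [MeasurableSpace X] (μ : Measure X) (U : Set (Mble X))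
    (hU : @IsOpen (Mble X) (FTop μ) U) (f : Mble X) (hf : f ∈ U) :
    ∃ A : Set X, MeasurableSet A ∧ μ A < ⊤ ∧
      ∀ g : Mble X, (∀ x ∈ A, g.1 x = f.1 x) → g ∈ U := by
  have hU' : TopologicalSpace.GenerateOpen _ U := hU
  clear hU
  induction hU' with
  | basic s hs =>
    obtain ⟨h, A, ε, hA, hfin, hε, rfl⟩ := hs
    obtain ⟨N, hN, hN0, b, hb, hle⟩ := hf
    refine ⟨A, hA, hfin, fun g hg => ⟨N, hN, hN0, b, hb, fun x hx => ?_⟩⟩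
    rw [hg x hx.1]
    exact hle x hx
  | univ => exact ⟨∅, MeasurableSet.empty, by simp, fun _ _ => trivial⟩
  | inter s t _ _ ihs iht =>
    obtain ⟨A, hA, hA', h1⟩ := ihs hf.1
    obtain ⟨B, hB, hB', h2⟩ := iht hf.2
    exact ⟨A ∪ B, hA.union hB, measure_union_lt_top hA' hB', fun g hg =>
      ⟨h1 g fun x hx => hg x (Or.inl hx), h2 g fun x hx => hg x (Or.inr hx)⟩⟩
  | sUnion S _ ih =>
    obtain ⟨s, hs, hfs⟩ := hf
    obtain ⟨A, hA, hA', h1⟩ := ih s hs hfs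
    exact ⟨A, hA, hA', fun g hg => ⟨s, hs, h1 g hg⟩⟩

/-- every a.e.-equivalence class `[f]` is a `G_δ` subset of `M_F` iff
`μ` is `σ`-finite. -/
theorem stmt17 {X : Type*} [MeasurableSpace X] (μ : Measure X)
    (hpos : 0 < μ Set.univ)
    (hsub : ∀ A : Set X, MeasurableSet A → μ A = ⊤ →
      ∃ B, B ⊆ A ∧ MeasurableSet B ∧ 0 < μ B ∧ μ B < ⊤) :
    (∀ f : Mble X, @IsGδ (Mble X) (FTop μ) {g : Mble X | ∀ᵐ x ∂μ, g.1 x = f.1 x}) ↔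
      ∃ A : ℕ → Set X, (∀ n, MeasurableSet (A n) ∧ μ (A n) < ⊤) ∧
        (⋃ n, A n) = Set.univ := by
  constructor
  · intro h
    obtain ⟨U, hU, hEq⟩ := (@isGδ_iff_eq_iInter_nat _ (FTop μ) _).1 (h zeroM)
    have hz : (zeroM : Mble X) ∈ ⋂ n, U n := by
      rw [← hEq]
      show ∀ᵐ x ∂μ, (zeroM : Mble X).1 x = (zeroM : Mble X).1 x
      exact Filter.Eventually.of_forall fun _ => rfl
    choose A hA hA' hag using fun n =>
      FTop_open_agree μ (U n) (hU n) zeroM (mem_iInter.1 hz n)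
    have hC : MeasurableSet (⋃ n, A n)ᶜ := (MeasurableSet.iUnion hA).compl
    have hg : (⟨(⋃ n, A n)ᶜ.indicator (fun _ => (1 : ℝ)), measurable_const.indicator hC⟩ :
        Mble X) ∈ ⋂ n, U n := by
      refine mem_iInter.2 fun n => hag n _ fun x hx => ?_
      have hx' : x ∉ (⋃ n, A n)ᶜ := fun hc => hc (mem_iUnion.2 ⟨n, hx⟩)
      show (⋃ n, A n)ᶜ.indicator (fun _ => (1 : ℝ)) x = 0
      exact indicator_of_notMem hx' _
    rw [← hEq] at hg
    have hnull : μ (⋃ n, A n)ᶜ = 0 := by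
      refine measure_mono_null (fun x hx => ?_) (ae_iff.1 hg)
      show ¬ ((⋃ n, A n)ᶜ.indicator (fun _ => (1 : ℝ)) x = 0)
      rw [indicator_of_mem hx]
      exact one_ne_zero
    refine ⟨fun n => A n ∪ (⋃ n, A n)ᶜ, fun n => ⟨(hA n).union hC,
      measure_union_lt_top (hA' n) (by rw [hnull]; simp)⟩, ?_⟩
    rw [← iUnion_union, union_compl_self]
  · rintro ⟨A, hA, hcov⟩ f
    letI := FTop μ
    have hEq : {g : Mble X | ∀ᵐ x ∂μ, g.1 x = f.1 x} =
        ⋂ n : ℕ, ⋂ k : ℕ, FBall μ f (A n) (1 / ((k : ℝ) + 1)) := by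
      ext g
      simp only [mem_iInter]
      constructor
      · intro hg n k
        obtain ⟨N, hsubN, hN, hN0⟩ := exists_measurable_superset_of_null (ae_iff.1 hg)
        refine ⟨N, hN, hN0, 0, by positivity, fun x hx => ?_⟩
        have : g.1 x = f.1 x := by
          by_contra hne
          exact hx.2 (hsubN hne)
        simp [this]
      · intro hg
        choose N _ hN0 b hb hle using hg
        refine measure_mono_null (t := ⋃ n, ⋃ k, N n k) (fun x hx => ?_)
          (measure_iUnion_null fun n => measure_iUnion_null fun k => hN0 n k)
        by_contra hx'
        simp only [mem_iUnion, not_exists] at hx'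
        obtain ⟨n, hn⟩ := mem_iUnion.1 (hcov ▸ mem_univ x : x ∈ ⋃ n, A n)
        have hne : g.1 x ≠ f.1 x := hx
        have hp : 0 < |f.1 x - g.1 x| := abs_pos.2 (sub_ne_zero.2 hne.symm)
        obtain ⟨k, hk⟩ := exists_nat_one_div_lt hp
        have h1 := hle n k x ⟨hn, hx' n k⟩
        have h2 := hb n k
        linarith
    rw [hEq]
    refine IsGδ.iInter fun n => IsGδ.iInter fun k => IsOpen.isGδ ?_
    exact TopologicalSpace.isOpen_generateFrom_of_mem
      ⟨f, A n, _, (hA n).1, (hA n).2, by positivity, rfl⟩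
end
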